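/- Let F be a 3-satisfiable weighted CNF formula. Then there exists a subset U of V(F) and a truth assignment tau such that sat_tau(F) >= (2/3) w(F) + (1/3) w(F_U) + (2/453) |V(F \ F_U)|, where F_U is the set of clauses containing a variable of U. -/

import Mathlib

open Classical

/-- A clause: a finite set of literals, each a (variable, polarity) pair. -/
abbrev Clause := Finset (ℕ × Bool)

/-- A truth assignment satisfies a clause if some literal evaluates to true. -/
def SatC (τ : ℕ → Bool) (C : Clause) : Prop := ∃ l ∈ C, τ l.1 = l.2

/-- A CNF formula: clauses are nonempty and contain no variable together with its negation. -/
def IsCNF (F : Finset Clause) : Prop :=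
  ∀ C ∈ F, C.Nonempty ∧ ∀ v : ℕ, ¬((v, true) ∈ C ∧ (v, false) ∈ C)

/-- Total weight of a set of clauses. -/
def wt (w : Clause → ℕ) (G : Finset Clause) : ℕ := ∑ C ∈ G, w C

/-- Total weight of the clauses of `G` satisfied by `τ`. -/
noncomputable def satWt (w : Clause → ℕ) (τ : ℕ → Bool) (G : Finset Clause) : ℕ :=
  ∑ C ∈ G.filter (fun C => SatC τ C), w C

/-- `F` is 2-satisfiable. -/
def Sat2 (F : Finset Clause) : Prop :=
  ∀ C1 ∈ F, ∀ C2 ∈ F, ∃ τ, SatC τ C1 ∧ SatC τ C2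

/-- `F` is 3-satisfiable. -/
def Sat3 (F : Finset Clause) : Prop :=
  ∀ C1 ∈ F, ∀ C2 ∈ F, ∀ C3 ∈ F, ∃ τ, SatC τ C1 ∧ SatC τ C2 ∧ SatC τ C3

/-- The set of variables of a formula. -/
def vars (F : Finset Clause) : Finset ℕ := F.sup (fun C => C.image Prod.fst)

/-- The set of clauses of `F` containing a variable of `U`. -/
noncomputable def FU (F : Finset Clause) (U : Finset ℕ) : Finset Clause :=
  F.filter (fun C => ∃ l ∈ C, l.1 ∈ U)

/-- Unit variables: variables occurring in unit clauses. -/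
def unitVars (F : Finset Clause) : Finset ℕ :=
  (F.filter (fun C => C.card = 1)).sup (fun C => C.image Prod.fst)

/-- All unit clauses of `F` are positive. -/
def UnitPos (F : Finset Clause) : Prop :=
  ∀ C ∈ F, C.card = 1 → ∃ x, C = {(x, true)}

/-- A hard clause: a positive unit clause, or a two-literal clause `{¬x, y}` / `{¬x, ¬y}`
with `x` a unit variable and `y` not a unit variable. -/
def IsHard (F : Finset Clause) (C : Clause) : Prop :=
  (∃ x, C = {(x, true)}) ∨
  (∃ x ∈ unitVars F, ∃ y ∉ unitVars F, ∃ b : Bool, C = {(x, false), (y, b)})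

/-- The soft (non-hard) clauses of `F`. -/
noncomputable def softF (F : Finset Clause) : Finset Clause :=
  F.filter (fun C => ¬ IsHard F C)

/-- Two-literal hard clauses. -/
noncomputable def F2set (F : Finset Clause) : Finset Clause :=
  F.filter (fun C => ∃ x ∈ unitVars F, ∃ y ∉ unitVars F, ∃ b : Bool, C = {(x, false), (y, b)})

/-- Non-unit variables occurring in two-literal hard clauses. -/
noncomputable def V2set (F : Finset Clause) : Finset ℕ :=
  ((F2set F).sup (fun C => C.image Prod.fst)) \ unitVars F

/-- `F` is a hard formula: every clause is hard. -/
def HardFormula (F : Finset Clause) : Prop := ∀ C ∈ F, IsHard F C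

/-- `F` is expanding: every set `X` of variables is covered by clauses of total weight at least `|X|`. -/
def Expanding (F : Finset Clause) (w : Clause → ℕ) : Prop :=
  ∀ X ⊆ vars F, X.card ≤ wt w (FU F X)

/-- Extend an assignment on the variables of `F` to all of `ℕ`. -/
noncomputable def extAssign (F : Finset Clause) (α : {v // v ∈ vars F} → Bool) : ℕ → Bool :=
  fun n => if h : n ∈ vars F then α ⟨n, h⟩ else false

/-- The probability that the random assignment (unit variables true with probability 2/3,
other variables true with probability 1/2, independently) satisfies the clause `C`. -/
noncomputable def probSat (F : Finset Clause) (C : Clause) : ℝ :=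
  ∑ α : {v // v ∈ vars F} → Bool,
    (∏ v : {v // v ∈ vars F},
      (if (v : ℕ) ∈ unitVars F then (if α v then (2:ℝ)/3 else 1/3) else 1/2)) *
    (if SatC (extAssign F α) C then 1 else 0)

/-- Average of `f` after redrawing the variable `v`, which becomes true with probability `q v`. -/
def resample (q : ℕ → ℝ) (v : ℕ) (f : (ℕ → Bool) → ℝ) : (ℕ → Bool) → ℝ :=
  fun τ => q v * f (Function.update τ v true) + (1 - q v) * f (Function.update τ v false)

lemma resample_idem (q : ℕ → ℝ) (v : ℕ) (f : (ℕ → Bool) → ℝ) :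
    resample q v (resample q v f) = resample q v f := by
  funext τ
  simp only [resample, Function.update_idem]
  ring

lemma resample_comm (q : ℕ → ℝ) {u v : ℕ} (h : u ≠ v) (f : (ℕ → Bool) → ℝ) :
    resample q u (resample q v f) = resample q v (resample q u f) := by
  funext τ
  simp only [resample, Function.update_comm h]
  ring

/-- `E` is the expectation over assignments in which each variable `v ∈ V` is independently true
with probability `q v`. -/
structure IsProductExpectation (q : ℕ → ℝ) (V : Finset ℕ)
    (E : ((ℕ → Bool) → ℝ) →ₗ[ℝ] ℝ) : Prop where
  exists_le : ∀ f, ∃ τ, E f ≤ f τ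
  resample_eq : ∀ v ∈ V, ∀ f, E (resample q v f) = E f

lemma exists_isProductExpectation (q : ℕ → ℝ) (h0 : ∀ v, 0 ≤ q v) (h1 : ∀ v, q v ≤ 1)
    (V : Finset ℕ) : ∃ E, IsProductExpectation q V E := by
  induction V using Finset.induction_on with
  | empty =>
    exact ⟨LinearMap.proj (fun _ => true), fun f => ⟨_, le_rfl⟩, by simp⟩
  | insert a V ha ih =>
    obtain ⟨E, hE⟩ := ih
    let R : ((ℕ → Bool) → ℝ) →ₗ[ℝ] ((ℕ → Bool) → ℝ) :=
      { toFun := resample q a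
        map_add' := fun f g => by funext τ; simp only [resample, Pi.add_apply]; ring
        map_smul' := fun c f => by
          funext τ; simp only [resample, Pi.smul_apply, smul_eq_mul, RingHom.id_apply]; ring }
    refine ⟨E.comp R, fun f => ?_, fun v hv f => ?_⟩
    · obtain ⟨τ, hτ⟩ := hE.exists_le (resample q a f)
      by_contra! hc
      have ht := hc (Function.update τ a true)
      have hf := hc (Function.update τ a false)
      change E (resample q a f) ≤ q a * _ + (1 - q a) * _ at hτ
      change _ < E (resample q a f) at ht
      change _ < E (resample q a f) at hf
      rcases (h0 a).lt_or_eq with h | h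
      · nlinarith [mul_lt_mul_of_pos_left ht h,
          mul_le_mul_of_nonneg_left hf.le (sub_nonneg.2 (h1 a))]
      · rw [← h] at hτ
        linarith
    · change E (resample q a (resample q v f)) = E (resample q a f)
      rcases eq_or_ne a v with rfl | hav
      · rw [resample_idem]
      · rw [resample_comm q hav,
          hE.resample_eq v ((Finset.mem_insert.1 hv).resolve_left hav.symm)]

namespace IsProductExpectation

variable {q : ℕ → ℝ} {V : Finset ℕ} {E : ((ℕ → Bool) → ℝ) →ₗ[ℝ] ℝ}

lemma mono (hE : IsProductExpectation q V E) {f g : (ℕ → Bool) → ℝ} (h : ∀ τ, f τ ≤ g τ) :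
    E f ≤ E g := by
  obtain ⟨τ, hτ⟩ := hE.exists_le (f - g)
  rw [map_sub, Pi.sub_apply] at hτ
  linarith [h τ]

lemma const (hE : IsProductExpectation q V E) (c : ℝ) : E (fun _ => c) = c := by
  obtain ⟨τ, hτ⟩ := hE.exists_le (fun _ => c)
  obtain ⟨τ', hτ'⟩ := hE.exists_le (-(fun _ => c))
  rw [map_neg, Pi.neg_apply] at hτ'
  linarith

lemma sum {ι : Type*} (E : ((ℕ → Bool) → ℝ) →ₗ[ℝ] ℝ) (s : Finset ι)
    (f : ι → (ℕ → Bool) → ℝ) : E (fun τ => ∑ i ∈ s, f i τ) = ∑ i ∈ s, E (f i) := by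
  rw [← map_sum]
  congr 1
  funext τ
  simp

/-- A literal on `v` is independent of any quantity that ignores `v`. -/
lemma ite_mul (hE : IsProductExpectation q V E) {v : ℕ} (hv : v ∈ V) (b : Bool)
    (g : (ℕ → Bool) → ℝ) (hg : ∀ τ c, g (Function.update τ v c) = g τ) :
    E (fun τ => if τ v = b then g τ else 0) = (if b then q v else 1 - q v) * E g := by
  rw [← hE.resample_eq v hv, ← smul_eq_mul, ← map_smul]
  congr 1
  funext τ
  cases b <;> simp [resample, hg]

lemma ite_const (hE : IsProductExpectation q V E) {v : ℕ} (hv : v ∈ V) (b : Bool) (c : ℝ) :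
    E (fun τ => if τ v = b then c else 0) = (if b then q v else 1 - q v) * c := by
  rw [hE.ite_mul hv b (fun _ => c) (fun _ _ => rfl), hE.const]

end IsProductExpectation

/-- Satisfied weight of a formula with unit clauses `{x = p x}` of weight `u x` for `x ∈ X`, and
clauses `{x ≠ p x, y = b}` of weight `h x y b` for `x ∈ X`, `y ∈ Y`. -/
noncomputable def hardSat (X Y : Finset ℕ) (p : ℕ → Bool) (u : ℕ → ℕ) (h : ℕ → ℕ → Bool → ℕ)
    (τ : ℕ → Bool) : ℝ :=
  ∑ x ∈ X, ((if τ x = p x then (u x : ℝ) else 0) +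
    ∑ y ∈ Y, ((h x y true : ℝ) + h x y false - if τ x = p x then (h x y (!τ y) : ℝ) else 0))

/-- Total weight of the formula described at `hardSat`. -/
noncomputable def hardWt (X Y : Finset ℕ) (u : ℕ → ℕ) (h : ℕ → ℕ → Bool → ℕ) : ℝ :=
  ∑ x ∈ X, ((u x : ℝ) + ∑ y ∈ Y, ((h x y true : ℝ) + h x y false))

lemma half_le_expect_abs_sub {Y : Finset ℕ} {E : ((ℕ → Bool) → ℝ) →ₗ[ℝ] ℝ}
    (hE : IsProductExpectation (fun _ => 1 / 2) Y E) (k : ℕ → Bool → ℕ) (m : ℕ) {y : ℕ}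
    (hy : y ∈ Y) (hk : k y true ≠ k y false) :
    1 / 2 ≤ E (fun τ => |((∑ z ∈ Y, k z (!τ z) : ℕ) : ℝ) - m|) := by
  rw [← hE.resample_eq y hy]
  refine (hE.const (1 / 2)).ge.trans (hE.mono fun τ => ?_)
  have key : ∀ b, ∑ z ∈ Y, k z (!(Function.update τ y b) z)
      = k y (!b) + ∑ z ∈ Y.erase y, k z (!τ z) := by
    intro b
    rw [← Finset.add_sum_erase _ _ hy, Function.update_self]
    congr 1
    refine Finset.sum_congr rfl fun z hz => ?_
    rw [Function.update_of_ne (Finset.ne_of_mem_erase hz)]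
  simp only [resample, key, Bool.not_true, Bool.not_false]
  generalize ∑ z ∈ Y.erase y, k z (!τ z) = B
  have hz : (1 : ℤ) ≤ |((k y false + B : ℕ) : ℤ) - m| + |((k y true + B : ℕ) : ℤ) - m| := by
    rcases abs_cases (((k y false + B : ℕ) : ℤ) - m) with h | h <;>
      rcases abs_cases (((k y true + B : ℕ) : ℤ) - m) with h' | h' <;> omega
  have hr : (1 : ℝ) ≤ |((k y false + B : ℕ) : ℝ) - m| + |((k y true + B : ℕ) : ℝ) - m| := by
    exact_mod_cast hz
  linarith

/-- Drawing the variables of `Y` uniformly and then choosing each `x ∈ X` optimally gains `1/6`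
for every `x`. -/
lemma exists_hardSat_ge_card_units (X Y : Finset ℕ) (hXY : ∀ y ∈ Y, y ∉ X) (p : ℕ → Bool)
    (u : ℕ → ℕ) (h : ℕ → ℕ → Bool → ℕ) (hu : ∀ x ∈ X, 0 < u x)
    (hh : ∀ x ∈ X, ∀ y ∈ Y, h x y true = 0 ∨ h x y false = 0) :
    ∃ τ, 2 / 3 * hardWt X Y u h + (X.card : ℝ) / 6 ≤ hardSat X Y p u h τ := by
  obtain ⟨E, hE⟩ := exists_isProductExpectation (fun _ => 1 / 2) (fun _ => by norm_num)
    (fun _ => by norm_num) Y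
  set A : ℕ → (ℕ → Bool) → ℕ := fun x τ => ∑ y ∈ Y, h x y (!τ y) with hA
  set W : ℕ → ℝ := fun x => ∑ y ∈ Y, ((h x y true : ℝ) + h x y false) with hW
  have hEA : ∀ x, E (fun τ => (A x τ : ℝ)) = W x / 2 := by
    intro x
    simp only [hA, hW, Nat.cast_sum]
    rw [IsProductExpectation.sum, Finset.sum_div]
    refine Finset.sum_congr rfl fun y hy => ?_
    rw [← hE.resample_eq y hy]
    rw [← hE.const (((h x y true : ℝ) + h x y false) / 2)]
    congr 1
    funext τ
    simp [resample]
    ring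
  have hmin : ∀ x ∈ X, E (fun τ => min (u x : ℝ) (A x τ)) ≤ (u x + W x) / 3 - 1 / 6 := by
    intro x hx
    have hux : (1 : ℝ) ≤ u x := by exact_mod_cast hu x hx
    by_cases hy : ∃ y ∈ Y, h x y true ≠ h x y false
    · obtain ⟨y, hy, hne⟩ := hy
      have hle : E (fun τ => min (u x : ℝ) (A x τ)) ≤
          E ((fun _ => (u x : ℝ) / 3) + (2 / 3 : ℝ) • (fun τ => (A x τ : ℝ))
            - (1 / 3 : ℝ) • (fun τ => |(A x τ : ℝ) - u x|)) := by
        refine hE.mono fun τ => ?_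
        simp only [Pi.add_apply, Pi.sub_apply, Pi.smul_apply, smul_eq_mul]
        rcases le_total (u x : ℝ) (A x τ) with h' | h'
        · rw [min_eq_left h', abs_of_nonneg (by linarith)]; linarith
        · rw [min_eq_right h', abs_of_nonpos (by linarith)]; linarith
      rw [map_sub, map_add, map_smul, map_smul, hE.const, hEA, smul_eq_mul, smul_eq_mul] at hle
      have := half_le_expect_abs_sub hE (h x) (u x) hy hne
      linarith
    · push Not at hy
      have hz : ∀ y ∈ Y, ∀ b, h x y b = 0 := by
        intro y hyY b
        have h1 := hy y hyY
        have h2 := hh x hx y hyY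
        cases b <;> omega
      have hA0 : ∀ τ, A x τ = 0 := fun τ => Finset.sum_eq_zero fun y hy => hz y hy _
      have hW0 : W x = 0 := Finset.sum_eq_zero fun y hy => by simp [hz y hy]
      have : (fun τ => min (u x : ℝ) (A x τ)) = fun _ => 0 := by
        funext τ
        rw [hA0]
        simp
      rw [this, hE.const, hW0]
      linarith
  obtain ⟨τ, hτ⟩ := hE.exists_le (-(fun τ => ∑ x ∈ X, min (u x : ℝ) (A x τ)))
  rw [map_neg, IsProductExpectation.sum, Pi.neg_apply, neg_le_neg_iff] at hτ
  refine ⟨fun v => if v ∈ X then (if A v τ ≤ u v then p v else !p v) else τ v, ?_⟩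
  have hsat : hardSat X Y p u h
      (fun v => if v ∈ X then (if A v τ ≤ u v then p v else !p v) else τ v)
      = ∑ x ∈ X, ((u x : ℝ) + W x - min (u x : ℝ) (A x τ)) := by
    refine Finset.sum_congr rfl fun x hx => ?_
    rw [Finset.sum_sub_distrib]
    have hAx : ∑ y ∈ Y, (h x y (!(if y ∈ X then (if A y τ ≤ u y then p y else !p y) else τ y)) : ℝ)
        = A x τ := by
      rw [hA, Nat.cast_sum]
      refine Finset.sum_congr rfl fun y hy => ?_
      rw [if_neg (hXY y hy)]
    simp only [if_pos hx]
    by_cases hle : A x τ ≤ u x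
    · simp only [if_pos hle, if_true]
      rw [hAx, min_eq_right (by exact_mod_cast hle)]
      ring
    · simp only [if_neg hle, Bool.not_eq_self, if_false, Finset.sum_const_zero]
      rw [min_eq_left (by exact_mod_cast (not_le.1 hle).le)]
      ring
  have hsum := Finset.sum_le_sum hmin
  rw [hsat, Finset.sum_sub_distrib, hardWt]
  rw [Finset.sum_sub_distrib, ← Finset.sum_div, Finset.sum_const, nsmul_eq_mul] at hsum
  linarith

lemma four_ninths_le_expect_abs {X : Finset ℕ} {E : ((ℕ → Bool) → ℝ) →ₗ[ℝ] ℝ} {p : ℕ → Bool}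
    {q : ℕ → ℝ} (hq : ∀ x ∈ X, q x = if p x then 2 / 3 else 1 / 3)
    (hE : IsProductExpectation q X E) (k : ℕ → ℤ) {x : ℕ} (hx : x ∈ X) (hk : k x ≠ 0) :
    4 / 9 ≤ E (fun τ => |((∑ z ∈ X, (if τ z = p z then k z else 0) : ℤ) : ℝ)|) := by
  have key : ∀ s : Finset ℕ, ∀ x ∈ s, ∀ τ b,
      ∑ z ∈ s, (if (Function.update τ x b) z = p z then k z else 0)
      = (if b = p x then k x else 0) + ∑ z ∈ s.erase x, (if τ z = p z then k z else 0) := by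
    intro s x hx τ b
    rw [← Finset.add_sum_erase _ _ hx, Function.update_self]
    congr 1
    refine Finset.sum_congr rfl fun z hz => ?_
    rw [Function.update_of_ne (Finset.ne_of_mem_erase hz)]
  have hres : ∀ x ∈ X, ∀ f : (ℕ → Bool) → ℝ, ∀ τ, resample q x f τ =
      2 / 3 * f (Function.update τ x (p x)) + 1 / 3 * f (Function.update τ x (!p x)) := by
    intro x hx f τ
    rw [resample, hq x hx]
    cases p x <;>
      simp only [if_true, Bool.false_eq_true, if_false, Bool.not_true, Bool.not_false] <;> ring
  have hge : ∀ n : ℤ, n ≠ 0 → (1 : ℝ) ≤ |(n : ℝ)| := fun n hn => by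
    exact_mod_cast Int.one_le_abs hn
  by_cases hy : ∃ y ∈ X.erase x, k y ≠ 0
  · obtain ⟨y, hy, hky⟩ := hy
    have hyX := Finset.mem_of_mem_erase hy
    rw [← hE.resample_eq x hx, ← hE.resample_eq y hyX, ← hE.const (4 / 9)]
    refine hE.mono fun τ => ?_
    simp only [hres x hx, hres y hyX, key X x hx, key (X.erase x) y hy]
    simp only [if_true, Bool.not_eq_self, if_false]
    generalize ∑ z ∈ (X.erase x).erase y, (if τ z = p z then k z else 0) = T
    by_cases hT : T = 0
    · subst hT
      have h1 := hge _ hk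
      have h2 := hge _ hky
      have h3 := abs_nonneg ((k x + (k y + 0) : ℤ) : ℝ)
      simp only [add_zero, zero_add] at *
      simp only [Int.cast_zero, abs_zero]
      linarith
    · have h1 := hge _ hT
      by_cases hs : k x + (k y + T) = 0
      · have h2 := hge (k x + T) (by omega)
        have h3 := hge (k y + T) (by omega)
        simp only [zero_add]
        rw [hs]
        simp only [Int.cast_zero, abs_zero]
        linarith
      · have h2 := hge _ hs
        have h3 := abs_nonneg ((k x + (0 + T) : ℤ) : ℝ)
        have h4 := abs_nonneg ((0 + (k y + T) : ℤ) : ℝ)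
        have h5 := abs_nonneg ((0 + (0 + T) : ℤ) : ℝ)
        linarith
  · push Not at hy
    rw [← hE.resample_eq x hx, ← hE.const (4 / 9)]
    refine hE.mono fun τ => ?_
    have hz : ∑ z ∈ X.erase x, (if τ z = p z then k z else 0) = 0 :=
      Finset.sum_eq_zero fun z hz => by simp [hy z hz]
    simp only [hres x hx, key X x hx, hz, if_true, add_zero]
    have h1 := hge _ hk
    have h2 := abs_nonneg (((if (!p x) = p x then k x else 0 : ℤ)) : ℝ)
    linarith

/-- Drawing each `x ∈ X` with bias `2/3` towards `p x` and then choosing each `y ∈ Y` optimally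
gains `2/9` for every `y` that occurs. -/
lemma exists_hardSat_ge_card_nonunits (X Y : Finset ℕ) (hXY : ∀ y ∈ Y, y ∉ X) (p : ℕ → Bool)
    (u : ℕ → ℕ) (h : ℕ → ℕ → Bool → ℕ)
    (hh : ∀ x ∈ X, ∀ y ∈ Y, h x y true = 0 ∨ h x y false = 0) :
    ∃ τ, 2 / 3 * hardWt X Y u h
      + 2 / 9 * ((Y.filter (fun y => ∃ x ∈ X, ∃ b, h x y b ≠ 0)).card : ℝ)
      ≤ hardSat X Y p u h τ := by
  set q : ℕ → ℝ := fun x => if p x then 2 / 3 else 1 / 3 with hqdef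
  obtain ⟨E, hE⟩ := exists_isProductExpectation q
    (fun v => by simp only [hqdef]; split_ifs <;> norm_num)
    (fun v => by simp only [hqdef]; split_ifs <;> norm_num) X
  have hlit : ∀ x ∈ X, ∀ c : ℝ, E (fun τ => if τ x = p x then c else 0) = 2 / 3 * c := by
    intro x hx c
    rw [hE.ite_const hx]
    simp only [hqdef]
    cases p x <;> norm_num
  set D : ℕ → Bool → (ℕ → Bool) → ℝ :=
    fun y b τ => ∑ x ∈ X, if τ x = p x then (h x y b : ℝ) else 0 with hD
  have hED : ∀ y b, E (D y b) = 2 / 3 * ∑ x ∈ X, (h x y b : ℝ) := by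
    intro y b
    rw [hD, IsProductExpectation.sum, Finset.mul_sum]
    exact Finset.sum_congr rfl fun x hx => hlit x hx _
  have hmin : ∀ y ∈ Y, E (fun τ => min (D y true τ) (D y false τ)) ≤
      1 / 3 * ∑ x ∈ X, ((h x y true : ℝ) + h x y false)
      - if ∃ x ∈ X, ∃ b, h x y b ≠ 0 then 2 / 9 else 0 := by
    intro y hy
    have heq : (fun τ => min (D y true τ) (D y false τ)) =
        (1 / 2 : ℝ) • D y true + (1 / 2 : ℝ) • D y false
          - (1 / 2 : ℝ) • (fun τ => |D y true τ - D y false τ|) := by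
      funext τ
      simp only [Pi.add_apply, Pi.sub_apply, Pi.smul_apply, smul_eq_mul]
      rcases le_total (D y true τ) (D y false τ) with hle | hle
      · rw [min_eq_left hle, abs_of_nonpos (by linarith)]; ring
      · rw [min_eq_right hle, abs_of_nonneg (by linarith)]; ring
    rw [heq, map_sub, map_add, map_smul, map_smul, map_smul, hED, hED]
    simp only [smul_eq_mul]
    rw [Finset.sum_add_distrib]
    split_ifs with hex
    · obtain ⟨x, hx, b, hb⟩ := hex
      have hk : ((h x y true : ℤ) - h x y false) ≠ 0 := by
        have := hh x hx y hy
        cases b <;> omega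
      have := four_ninths_le_expect_abs (p := p) (fun x _ => rfl) hE
        (fun x => (h x y true : ℤ) - h x y false) hx hk
      have hfun : (fun τ => |D y true τ - D y false τ|) = fun τ =>
          |((∑ z ∈ X, (if τ z = p z then (h z y true : ℤ) - h z y false else 0) : ℤ) : ℝ)| := by
        funext τ
        rw [hD, ← Finset.sum_sub_distrib, Int.cast_sum]
        congr 1
        refine Finset.sum_congr rfl fun z _ => ?_
        split_ifs <;> simp
      rw [hfun]
      linarith
    · have : 0 ≤ E (fun τ => |D y true τ - D y false τ|) := by
        rw [← hE.const 0]
        exact hE.mono fun τ => abs_nonneg _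
      linarith
  obtain ⟨τ, hτ⟩ := hE.exists_le ((fun τ => ∑ x ∈ X, if τ x = p x then (u x : ℝ) else 0)
    - (fun τ => ∑ y ∈ Y, min (D y true τ) (D y false τ)))
  rw [map_sub, IsProductExpectation.sum, IsProductExpectation.sum, Pi.sub_apply] at hτ
  refine ⟨fun v => if v ∈ X then τ v else decide (D v false τ ≤ D v true τ), ?_⟩
  have hsat : hardSat X Y p u h
      (fun v => if v ∈ X then τ v else decide (D v false τ ≤ D v true τ))
      = (∑ x ∈ X, if τ x = p x then (u x : ℝ) else 0)
        + ∑ y ∈ Y, (∑ x ∈ X, ((h x y true : ℝ) + h x y false)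
          - min (D y true τ) (D y false τ)) := by
    rw [hardSat, Finset.sum_add_distrib]
    congr 1
    · refine Finset.sum_congr rfl fun x hx => ?_
      simp only [if_pos hx]
    · rw [Finset.sum_comm]
      refine Finset.sum_congr rfl fun y hy => ?_
      rw [Finset.sum_sub_distrib]
      congr 1
      simp only [if_neg (hXY y hy)]
      by_cases hle : D y false τ ≤ D y true τ
      · rw [min_eq_right hle]
        refine Finset.sum_congr rfl fun x hx => ?_
        simp [hx, hle]
      · rw [min_eq_left (not_le.1 hle).le]
        refine Finset.sum_congr rfl fun x hx => ?_
        simp [hx, hle]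
  have hsum := Finset.sum_le_sum hmin
  rw [Finset.sum_congr rfl fun x hx => hlit x hx (u x), ← Finset.mul_sum] at hτ
  rw [Finset.sum_sub_distrib, ← Finset.mul_sum, ← Finset.sum_filter, Finset.sum_const,
    nsmul_eq_mul] at hsum
  rw [hsat, Finset.sum_sub_distrib, hardWt, Finset.sum_add_distrib,
    Finset.sum_comm (s := X) (t := Y)]
  linarith

lemma mem_vars {F : Finset Clause} {v : ℕ} : v ∈ vars F ↔ ∃ C ∈ F, ∃ l ∈ C, l.1 = v := by
  simp [vars, Finset.mem_sup]

lemma mem_unitVars {F : Finset Clause} {x : ℕ} :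
    x ∈ unitVars F ↔ ∃ b, ({(x, b)} : Clause) ∈ F := by
  simp only [unitVars, Finset.mem_sup, Finset.mem_filter, Finset.mem_image]
  constructor
  · rintro ⟨C, ⟨hC, hcard⟩, l, hl, rfl⟩
    obtain ⟨l', rfl⟩ := Finset.card_eq_one.1 hcard
    rw [Finset.mem_singleton] at hl
    exact ⟨l'.2, by simpa [hl] using hC⟩
  · rintro ⟨b, hb⟩
    exact ⟨_, ⟨hb, Finset.card_singleton _⟩, _, Finset.mem_singleton_self _, rfl⟩

lemma satC_singleton {τ : ℕ → Bool} {x : ℕ} {b : Bool} :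
    SatC τ {(x, b)} ↔ τ x = b := by
  simp [SatC]

lemma satC_pair {τ : ℕ → Bool} {l m : ℕ × Bool} :
    SatC τ {l, m} ↔ τ l.1 = l.2 ∨ τ m.1 = m.2 := by
  simp [SatC]

lemma satC_insert {τ : ℕ → Bool} {l : ℕ × Bool} {C : Clause} :
    SatC τ (insert l C) ↔ τ l.1 = l.2 ∨ SatC τ C := by
  simp [SatC]

/-- The polarity with which a unit variable of `F` occurs in its unit clause. -/
noncomputable def unitPol (F : Finset Clause) (x : ℕ) : Bool := decide (({(x, true)} : Clause) ∈ F)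

lemma unit_mem_iff {F : Finset Clause} (h3 : Sat3 F) {x : ℕ} {b : Bool} :
    ({(x, b)} : Clause) ∈ F ↔ x ∈ unitVars F ∧ b = unitPol F x := by
  have hboth : ¬(({(x, true)} : Clause) ∈ F ∧ ({(x, false)} : Clause) ∈ F) := by
    rintro ⟨ht, hf⟩
    obtain ⟨τ, h1, h2, -⟩ := h3 _ ht _ hf _ hf
    rw [satC_singleton] at h1 h2
    simp [h1] at h2
  rw [mem_unitVars, Bool.exists_bool, unitPol]
  by_cases ht : ({(x, true)} : Clause) ∈ F <;> cases b <;> simp_all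

/-- The hard clause saying that the unit clause of `x` fails or `y = b`. -/
noncomputable def hardClause (F : Finset Clause) (x y : ℕ) (b : Bool) : Clause :=
  {(x, !unitPol F x), (y, b)}

/-- The variables of `F` that do not occur in unit clauses. -/
noncomputable def nonunitVars (F : Finset Clause) : Finset ℕ := vars F \ unitVars F

/-- The clauses of `F` that are neither unit clauses nor of the form `hardClause F x y b`. -/
noncomputable def softClauses (F : Finset Clause) : Finset Clause :=
  (F.filter (fun C => ¬∃ x ∈ unitVars F, C = {(x, unitPol F x)})).filter
    (fun C => ¬∃ x ∈ unitVars F, ∃ y ∈ nonunitVars F, ∃ b, C = hardClause F x y b)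

/-- The weight of the clause `hardClause F x y b` in `F`, which is zero if it does not occur. -/
noncomputable def hardClauseWt (F : Finset Clause) (w : Clause → ℕ) (x y : ℕ) (b : Bool) : ℕ :=
  if hardClause F x y b ∈ F then w (hardClause F x y b) else 0

lemma hardClause_injOn (F : Finset Clause) :
    Set.InjOn (fun i : ℕ × ℕ × Bool => hardClause F i.1 i.2.1 i.2.2)
      {i | i.1 ∈ unitVars F ∧ i.2.1 ∉ unitVars F} := by
  rintro ⟨x, y, b⟩ ⟨hx, hy⟩ ⟨x', y', b'⟩ ⟨hx', hy'⟩ heq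
  simp only [hardClause] at heq hx hy hx' hy'
  have h1 : (x, !unitPol F x) ∈ ({(x', !unitPol F x'), (y', b')} : Clause) := by
    rw [← heq]; simp
  have h2 : (y, b) ∈ ({(x', !unitPol F x'), (y', b')} : Clause) := by
    rw [← heq]; simp
  simp only [Finset.mem_insert, Finset.mem_singleton, Prod.mk.injEq] at h1 h2
  have h1' : x = x' := by
    rcases h1 with h | h
    · exact h.1
    · exact absurd (h.1 ▸ hx) hy'
  have h2' : y = y' ∧ b = b' := by
    rcases h2 with h | h
    · exact absurd (h.1 ▸ hx') hy
    · exact h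
  rw [h1', h2'.1, h2'.2]

lemma unit_ne_hardClause {F : Finset Clause} {x x' y : ℕ} {b c : Bool}
    (hx : x ∈ unitVars F) (hy : y ∉ unitVars F) :
    ({(x', c)} : Clause) ≠ hardClause F x y b := by
  intro heq
  have h1 : (x, !unitPol F x) ∈ ({(x', c)} : Clause) := by rw [heq]; simp [hardClause]
  have h2 : (y, b) ∈ ({(x', c)} : Clause) := by rw [heq]; simp [hardClause]
  simp only [Finset.mem_singleton, Prod.mk.injEq] at h1 h2
  exact hy (h2.1 ▸ h1.1 ▸ hx)

lemma sum_eq_units_add_hard_add_soft {F : Finset Clause} (h3 : Sat3 F) (f : Clause → ℝ) :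
    ∑ C ∈ F, f C = ∑ x ∈ unitVars F, (f {(x, unitPol F x)} + ∑ y ∈ nonunitVars F,
        ((if hardClause F x y true ∈ F then f (hardClause F x y true) else 0)
          + if hardClause F x y false ∈ F then f (hardClause F x y false) else 0))
      + ∑ C ∈ softClauses F, f C := by
  have hU : F.filter (fun C => ∃ x ∈ unitVars F, C = {(x, unitPol F x)})
      = (unitVars F).image (fun x => ({(x, unitPol F x)} : Clause)) := by
    ext C
    simp only [Finset.mem_filter, Finset.mem_image]
    constructor
    · rintro ⟨-, x, hx, rfl⟩
      exact ⟨x, hx, rfl⟩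
    · rintro ⟨x, hx, rfl⟩
      exact ⟨(unit_mem_iff h3).2 ⟨hx, rfl⟩, x, hx, rfl⟩
  have hH : (F.filter (fun C => ¬∃ x ∈ unitVars F, C = {(x, unitPol F x)})).filter
      (fun C => ∃ x ∈ unitVars F, ∃ y ∈ nonunitVars F, ∃ b, C = hardClause F x y b)
      = ((unitVars F ×ˢ nonunitVars F ×ˢ Finset.univ).filter
          (fun i => hardClause F i.1 i.2.1 i.2.2 ∈ F)).image
          (fun i => hardClause F i.1 i.2.1 i.2.2) := by
    ext C
    simp only [Finset.mem_filter, Finset.mem_image, Finset.mem_product, Finset.mem_univ,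
      and_true, Prod.exists]
    constructor
    · rintro ⟨⟨hC, -⟩, x, hx, y, hy, b, rfl⟩
      exact ⟨x, y, b, ⟨⟨hx, hy⟩, hC⟩, rfl⟩
    · rintro ⟨x, y, b, ⟨⟨hx, hy⟩, hC⟩, rfl⟩
      refine ⟨⟨hC, ?_⟩, x, hx, y, hy, b, rfl⟩
      rintro ⟨x', -, heq⟩
      exact unit_ne_hardClause hx (Finset.mem_sdiff.1 hy).2 heq.symm
  rw [← Finset.sum_filter_add_sum_filter_not F
    (fun C => ∃ x ∈ unitVars F, C = {(x, unitPol F x)}), hU,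
    ← Finset.sum_filter_add_sum_filter_not (F.filter _)
    (fun C => ∃ x ∈ unitVars F, ∃ y ∈ nonunitVars F, ∃ b, C = hardClause F x y b), hH,
    Finset.sum_image, Finset.sum_image, Finset.sum_filter, Finset.sum_product,
    Finset.sum_add_distrib, ← add_assoc]
  · simp only [Finset.sum_product, Fintype.sum_bool, softClauses]
  · refine (hardClause_injOn F).mono ?_
    rintro ⟨x, y, b⟩ hi
    simp only [Finset.coe_filter, Finset.mem_product, Set.mem_ofPred_eq] at hi
    exact ⟨hi.1.1, (Finset.mem_sdiff.1 hi.1.2.1).2⟩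
  · intro x _ x' _ heq
    have := Finset.singleton_injective heq
    exact congrArg Prod.fst this

lemma satWt_cast (w : Clause → ℕ) (τ : ℕ → Bool) (G : Finset Clause) :
    (satWt w τ G : ℝ) = ∑ C ∈ G, if SatC τ C then (w C : ℝ) else 0 := by
  rw [satWt, Nat.cast_sum, Finset.sum_filter]

lemma wt_eq_hardWt_add_soft {F : Finset Clause} (w : Clause → ℕ) (h3 : Sat3 F) :
    (wt w F : ℝ) = hardWt (unitVars F) (nonunitVars F) (fun x => w {(x, unitPol F x)})
      (hardClauseWt F w) + wt w (softClauses F) := by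
  rw [wt, wt, Nat.cast_sum, Nat.cast_sum, sum_eq_units_add_hard_add_soft h3, hardWt]
  congr 1
  refine Finset.sum_congr rfl fun x _ => ?_
  congr 1
  refine Finset.sum_congr rfl fun y _ => ?_
  simp only [hardClauseWt]
  split_ifs <;> simp

lemma hardSat_le_satWt {F : Finset Clause} (w : Clause → ℕ) (h3 : Sat3 F) (τ : ℕ → Bool) :
    hardSat (unitVars F) (nonunitVars F) (unitPol F) (fun x => w {(x, unitPol F x)})
      (hardClauseWt F w) τ ≤ satWt w τ F := by
  rw [satWt_cast, sum_eq_units_add_hard_add_soft h3, hardSat]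
  have hs : (0 : ℝ) ≤ ∑ C ∈ softClauses F, if SatC τ C then (w C : ℝ) else 0 :=
    Finset.sum_nonneg fun C _ => by split_ifs <;> simp
  refine le_trans (le_of_eq ?_) (le_add_of_nonneg_right hs)
  refine Finset.sum_congr rfl fun x _ => ?_
  simp only [satC_singleton]
  congr 1
  refine Finset.sum_congr rfl fun y _ => ?_
  have hsat : ∀ b, SatC τ (hardClause F x y b) ↔ (τ x = unitPol F x → τ y = b) := by
    intro b
    rw [hardClause, satC_pair]
    cases τ x <;> cases unitPol F x <;> simp
  simp only [hsat, hardClauseWt]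
  cases τ y <;> by_cases hx : τ x = unitPol F x <;> simp [hx]

lemma hardClauseWt_eq_zero_or {F : Finset Clause} (w : Clause → ℕ) (h3 : Sat3 F) {x : ℕ}
    (hx : x ∈ unitVars F) (y : ℕ) :
    hardClauseWt F w x y true = 0 ∨ hardClauseWt F w x y false = 0 := by
  by_contra! hc
  have ht : hardClause F x y true ∈ F := by
    by_contra h
    exact hc.1 (if_neg h)
  have hf : hardClause F x y false ∈ F := by
    by_contra h
    exact hc.2 (if_neg h)
  obtain ⟨τ, h1, h2, h3⟩ := h3 _ ((unit_mem_iff h3).2 ⟨hx, rfl⟩) _ ht _ hf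
  rw [satC_singleton] at h1
  rw [hardClause, satC_pair] at h2 h3
  simp [h1] at h2 h3
  simp [h2] at h3

/-- The probability that the literal `l` is false when `v` is true with probability `q v`. -/
def falseProb (q : ℕ → ℝ) (l : ℕ × Bool) : ℝ := if !l.2 then q l.1 else 1 - q l.1

lemma IsProductExpectation.unsat {q : ℕ → ℝ} {V : Finset ℕ}
    {E : ((ℕ → Bool) → ℝ) →ₗ[ℝ] ℝ} (hE : IsProductExpectation q V E) (C : Clause)
    (hV : ∀ l ∈ C, l.1 ∈ V) (hC : ∀ v : ℕ, ¬((v, true) ∈ C ∧ (v, false) ∈ C)) :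
    E (fun τ => if SatC τ C then 0 else 1) = ∏ l ∈ C, falseProb q l := by
  induction C using Finset.induction_on with
  | empty => simpa [SatC] using hE.const 1
  | insert l C hl ih =>
    have hne : ∀ m ∈ C, m.1 ≠ l.1 := by
      rintro ⟨v, c⟩ hm rfl
      have := hC l.1
      obtain ⟨v, b⟩ := l
      cases b <;> cases c <;> simp_all
    rw [Finset.prod_insert hl, ← ih (fun m hm => hV m (Finset.mem_insert_of_mem hm))
      (fun v hv => hC v ⟨Finset.mem_insert_of_mem hv.1, Finset.mem_insert_of_mem hv.2⟩),
      falseProb, ← hE.ite_mul (hV l (Finset.mem_insert_self _ _))]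
    · congr 1
      funext τ
      rw [satC_insert]
      cases τ l.1 <;> cases l.2 <;> simp
    · intro τ c
      have : SatC (Function.update τ l.1 c) C ↔ SatC τ C := by
        refine exists_congr fun m => and_congr_right fun hm => ?_
        rw [Function.update_of_ne (hne m hm)]
      simp [this]

/-- The probability that a variable is true when unit variables satisfy their unit clause with
probability `2/3` and all other variables are uniform. -/
noncomputable def unitBias (F : Finset Clause) (x : ℕ) : ℝ :=
  if x ∈ unitVars F then (if unitPol F x then 2 / 3 else 1 / 3) else 1 / 2

lemma falseProb_unitBias (F : Finset Clause) (l : ℕ × Bool) :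
    falseProb (unitBias F) l =
      if l.1 ∈ unitVars F then (if l.2 = unitPol F l.1 then 1 / 3 else 2 / 3) else 1 / 2 := by
  obtain ⟨v, b⟩ := l
  simp only [falseProb, unitBias]
  by_cases hv : v ∈ unitVars F <;> cases b <;> cases unitPol F v <;> simp [hv] <;> norm_num

lemma falseProb_unitBias_bounds (F : Finset Clause) (l : ℕ × Bool) :
    0 ≤ falseProb (unitBias F) l ∧ falseProb (unitBias F) l ≤ 2 / 3 := by
  rw [falseProb_unitBias]
  split_ifs <;> norm_num

lemma prod_falseProb_soft_le {F : Finset Clause} (hF : IsCNF F) (h3 : Sat3 F) {C : Clause}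
    (hC : C ∈ softClauses F) :
    ∏ l ∈ C, falseProb (unitBias F) l ≤ 8 / 27 := by
  rw [softClauses, Finset.mem_filter, Finset.mem_filter] at hC
  obtain ⟨⟨hCF, hunit⟩, hhard⟩ := hC
  have hpos : 0 < C.card := Finset.card_pos.2 (hF C hCF).1
  have hvar : ∀ l ∈ C, l.1 ∈ vars F := fun l hl => mem_vars.2 ⟨C, hCF, l, hl, rfl⟩
  obtain h | h | h : C.card = 1 ∨ C.card = 2 ∨ 3 ≤ C.card := by omega
  · obtain ⟨⟨x, b⟩, rfl⟩ := Finset.card_eq_one.1 h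
    have := (unit_mem_iff h3).1 hCF
    exact absurd ⟨x, this.1, by rw [this.2]⟩ hunit
  · obtain ⟨l, m, hne, rfl⟩ := Finset.card_eq_two.1 h
    have hlm : ∀ l m : ℕ × Bool, ({l, m} : Clause) ∈ F → m.1 ∈ vars F →
        (¬∃ x ∈ unitVars F, ∃ y ∈ nonunitVars F, ∃ b, ({l, m} : Clause) = hardClause F x y b) →
        l.1 ∈ unitVars F → l.2 ≠ unitPol F l.1 → m.1 ∈ unitVars F ∧ m.2 = unitPol F m.1 := by
      intro l m hF' hm hh hl hl'
      have hl2 : l.2 = !unitPol F l.1 := by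
        cases h : l.2 <;> cases h' : unitPol F l.1 <;> simp_all
      have hmU : m.1 ∈ unitVars F := by
        by_contra hmU
        exact hh ⟨l.1, hl, m.1, Finset.mem_sdiff.2 ⟨hm, hmU⟩, m.2, by rw [hardClause, ← hl2]⟩
      refine ⟨hmU, ?_⟩
      by_contra hm'
      obtain ⟨τ, h1, h2, hs⟩ := h3 _ ((unit_mem_iff h3).2 ⟨hl, rfl⟩) _
        ((unit_mem_iff h3).2 ⟨hmU, rfl⟩) _ hF'
      rw [satC_singleton] at h1 h2
      rw [satC_pair, h1, h2] at hs
      exact hs.elim (fun h => hl' h.symm) (fun h => hm' h.symm)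
    have h1 := hlm l m hCF (hvar m (by simp)) hhard
    have h2 := hlm m l (by rwa [Finset.pair_comm]) (hvar l (by simp))
      (by rwa [Finset.pair_comm])
    rw [Finset.prod_pair hne, falseProb_unitBias, falseProb_unitBias]
    split_ifs <;> first | (exfalso; tauto) | norm_num
  · calc ∏ l ∈ C, falseProb (unitBias F) l
        ≤ ∏ _l ∈ C, (2 / 3 : ℝ) := Finset.prod_le_prod
          (fun l _ => (falseProb_unitBias_bounds F l).1) (fun l _ => (falseProb_unitBias_bounds F l).2)
      _ = (2 / 3 : ℝ) ^ C.card := Finset.prod_const _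
      _ ≤ (2 / 3 : ℝ) ^ 3 := pow_le_pow_of_le_one (by norm_num) (by norm_num) h
      _ = 8 / 27 := by norm_num

lemma prod_falseProb_le {F : Finset Clause} (hF : IsCNF F) (h3 : Sat3 F) {C : Clause}
    (hC : C ∈ F) : ∏ l ∈ C, falseProb (unitBias F) l ≤ 1 / 3 := by
  by_cases hs : C ∈ softClauses F
  · exact (prod_falseProb_soft_le hF h3 hs).trans (by norm_num)
  · rw [softClauses, Finset.mem_filter, Finset.mem_filter] at hs
    by_cases hu : ∃ x ∈ unitVars F, C = {(x, unitPol F x)}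
    · obtain ⟨x, hx, rfl⟩ := hu
      rw [Finset.prod_singleton, falseProb_unitBias]
      simp [hx]
    · obtain ⟨x, hx, y, hy, b, rfl⟩ : ∃ x ∈ unitVars F, ∃ y ∈ nonunitVars F, ∃ b,
          C = hardClause F x y b := by
        by_contra hh
        exact hs ⟨⟨hC, hu⟩, hh⟩
      have hyU := (Finset.mem_sdiff.1 hy).2
      have hne : (x, !unitPol F x) ≠ (y, b) := fun h => hyU ((Prod.mk.inj h).1 ▸ hx)
      rw [hardClause, Finset.prod_pair hne, falseProb_unitBias, falseProb_unitBias]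
      norm_num [hx, hyU]

lemma exists_satWt_ge_soft {F : Finset Clause} (w : Clause → ℕ) (hF : IsCNF F) (h3 : Sat3 F) :
    ∃ τ, 2 / 3 * (wt w F : ℝ) + (wt w (softClauses F) : ℝ) / 27 ≤ satWt w τ F := by
  obtain ⟨E, hE⟩ := exists_isProductExpectation (unitBias F)
    (fun v => by simp only [unitBias]; split_ifs <;> norm_num)
    (fun v => by simp only [unitBias]; split_ifs <;> norm_num) (vars F)
  obtain ⟨τ, hτ⟩ := hE.exists_le (fun τ => ∑ C ∈ F, if SatC τ C then (w C : ℝ) else 0)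
  refine ⟨τ, ?_⟩
  rw [satWt_cast]
  refine le_trans ?_ hτ
  rw [IsProductExpectation.sum]
  have hsub : softClauses F ⊆ F := (Finset.filter_subset _ _).trans (Finset.filter_subset _ _)
  have hsoft : (wt w (softClauses F) : ℝ) =
      ∑ C ∈ F, if C ∈ softClauses F then (w C : ℝ) else 0 := by
    rw [← Finset.sum_filter, Finset.filter_mem_eq_inter, Finset.inter_eq_right.2 hsub, wt,
      Nat.cast_sum]
  rw [hsoft, wt, Nat.cast_sum, Finset.mul_sum, Finset.sum_div, ← Finset.sum_add_distrib]
  refine Finset.sum_le_sum fun C hC => ?_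
  have heq : (fun τ => if SatC τ C then (w C : ℝ) else 0)
      = (fun _ => (w C : ℝ)) - (w C : ℝ) • (fun τ => if SatC τ C then (0 : ℝ) else 1) := by
    funext τ
    simp only [Pi.sub_apply, Pi.smul_apply, smul_eq_mul]
    split_ifs <;> simp
  rw [heq, map_sub, map_smul, hE.const, smul_eq_mul,
    hE.unsat C (fun l hl => mem_vars.2 ⟨C, hC, l, hl, rfl⟩) (hF C hC).2]
  have hw : (0 : ℝ) ≤ w C := Nat.cast_nonneg _
  split_ifs with hs
  · nlinarith [mul_le_mul_of_nonneg_left (prod_falseProb_soft_le hF h3 hs) hw]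
  · nlinarith [mul_le_mul_of_nonneg_left (prod_falseProb_le hF h3 hC) hw]

lemma card_vars_le {F : Finset Clause} {w : Clause → ℕ} (hw : ∀ C ∈ F, 0 < w C)
    (hexp : Expanding F w) :
    (vars F).card ≤ (unitVars F).card + ((nonunitVars F).filter
      (fun y => ∃ x ∈ unitVars F, ∃ b, hardClauseWt F w x y b ≠ 0)).card
      + wt w (softClauses F) := by
  set N := (nonunitVars F).filter (fun y => ∃ x ∈ unitVars F, ∃ b, hardClauseWt F w x y b ≠ 0)
    with hN
  have hsub : FU F ((vars F \ unitVars F) \ N) ⊆ softClauses F := by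
    intro C hC
    obtain ⟨hCF, l, hl, hlU⟩ := Finset.mem_filter.1 hC
    obtain ⟨hlY, hlN⟩ := Finset.mem_sdiff.1 hlU
    have hlX := (Finset.mem_sdiff.1 hlY).2
    rw [softClauses, Finset.mem_filter, Finset.mem_filter]
    refine ⟨⟨hCF, ?_⟩, ?_⟩
    · rintro ⟨x, hx, rfl⟩
      rw [Finset.mem_singleton] at hl
      exact hlX (by rwa [hl])
    · rintro ⟨x, hx, y, hy, b, rfl⟩
      rw [hardClause, Finset.mem_insert, Finset.mem_singleton] at hl
      rcases hl with rfl | rfl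
      · exact hlX hx
      · refine hlN (Finset.mem_filter.2 ⟨hy, x, hx, b, ?_⟩)
        rw [hardClauseWt, if_pos hCF]
        exact (hw _ hCF).ne'
  have h1 := hexp ((vars F \ unitVars F) \ N)
    (Finset.sdiff_subset.trans Finset.sdiff_subset)
  have h2 : wt w (FU F ((vars F \ unitVars F) \ N)) ≤ wt w (softClauses F) :=
    Finset.sum_le_sum_of_subset hsub
  have h4 := Finset.card_le_card_sdiff_add_card (s := vars F \ unitVars F) (t := N)
  have h5 := Finset.card_le_card_sdiff_add_card (s := vars F) (t := unitVars F)
  omega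

lemma Expanding.exists_satWt_ge {F : Finset Clause} {w : Clause → ℕ} (hF : IsCNF F)
    (hw : ∀ C ∈ F, 0 < w C) (h3 : Sat3 F) (hexp : Expanding F w) :
    ∃ τ, 2 / 3 * (wt w F : ℝ) + 2 / 453 * ((vars F).card : ℝ) ≤ satWt w τ F := by
  have hXY : ∀ y ∈ nonunitVars F, y ∉ unitVars F := fun y hy => (Finset.mem_sdiff.1 hy).2
  obtain ⟨τ₁, h₁⟩ := exists_satWt_ge_soft w hF h3
  obtain ⟨τ₂, h₂⟩ := exists_hardSat_ge_card_units (unitVars F) (nonunitVars F) hXY (unitPol F)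
    (fun x => w {(x, unitPol F x)}) (hardClauseWt F w)
    (fun x hx => hw _ ((unit_mem_iff h3).2 ⟨hx, rfl⟩))
    (fun x hx y _ => hardClauseWt_eq_zero_or w h3 hx y)
  obtain ⟨τ₃, h₃⟩ := exists_hardSat_ge_card_nonunits (unitVars F) (nonunitVars F) hXY (unitPol F)
    (fun x => w {(x, unitPol F x)}) (hardClauseWt F w)
    (fun x hx y _ => hardClauseWt_eq_zero_or w h3 hx y)
  replace h₂ := h₂.trans (hardSat_le_satWt w h3 τ₂)
  replace h₃ := h₃.trans (hardSat_le_satWt w h3 τ₃)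
  have hwt := wt_eq_hardWt_add_soft w h3
  have hcard := Nat.cast_le (α := ℝ).2 (card_vars_le hw hexp)
  push_cast at hcard
  by_contra! hc
  linarith [hc τ₁, hc τ₂, hc τ₃]

lemma FU_union (F : Finset Clause) (U V : Finset ℕ) :
    FU F (U ∪ V) = FU F U ∪ FU (F \ FU F U) V := by
  ext C
  simp only [FU, Finset.mem_filter, Finset.mem_union, Finset.mem_sdiff]
  constructor
  · rintro ⟨hC, l, hl, h | h⟩
    · exact Or.inl ⟨hC, l, hl, h⟩
    · by_cases hU : ∃ l ∈ C, l.1 ∈ U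
      · exact Or.inl ⟨hC, hU⟩
      · exact Or.inr ⟨⟨hC, fun h' => hU h'.2⟩, l, hl, h⟩
  · rintro (⟨hC, l, hl, h⟩ | ⟨⟨hC, -⟩, l, hl, h⟩)
    · exact ⟨hC, l, hl, Or.inl h⟩
    · exact ⟨hC, l, hl, Or.inr h⟩

/-- Matching autarky theorem: some assignment `β` satisfies every clause meeting `U` through its
values on `U`, and the clauses avoiding `U` form an expanding formula. -/
lemma exists_autarky_expanding (F : Finset Clause) (w : Clause → ℕ) (hw : ∀ C ∈ F, 0 < w C) :
    ∃ U ⊆ vars F, (∃ β : ℕ → Bool, ∀ C ∈ FU F U, ∃ l ∈ C, l.1 ∈ U ∧ β l.1 = l.2) ∧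
      Expanding (F \ FU F U) w := by
  obtain ⟨U, hU, hmax⟩ := Finset.exists_max_image (vars F).powerset
    (fun U => (U.card : ℤ) - wt w (FU F U)) ⟨∅, Finset.empty_mem_powerset _⟩
  rw [Finset.mem_powerset] at hU
  refine ⟨U, hU, ?_, ?_⟩
  · let t : FU F U → Finset ℕ := fun C => (C.1.image Prod.fst) ∩ U
    have hall : ∀ s : Finset (FU F U), s.card ≤ (s.biUnion t).card := by
      intro s
      have hN : s.biUnion t ⊆ U := Finset.biUnion_subset.2 fun C _ => Finset.inter_subset_right
      have h1 := hmax (U \ s.biUnion t)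
        (Finset.mem_powerset.2 (Finset.sdiff_subset.trans hU))
      have hsub : FU F (U \ s.biUnion t) ⊆ FU F U \ s.map (Function.Embedding.subtype _) := by
        intro C hC
        obtain ⟨hCF, l, hl, hlU⟩ := Finset.mem_filter.1 hC
        obtain ⟨hlU, hlN⟩ := Finset.mem_sdiff.1 hlU
        refine Finset.mem_sdiff.2 ⟨Finset.mem_filter.2 ⟨hCF, l, hl, hlU⟩, fun hCs => hlN ?_⟩
        obtain ⟨C', hC', rfl⟩ := Finset.mem_map.1 hCs
        exact Finset.mem_biUnion.2 ⟨C', hC',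
          Finset.mem_inter.2 ⟨Finset.mem_image_of_mem _ hl, hlU⟩⟩
      have hsU : s.map (Function.Embedding.subtype _) ⊆ FU F U := by
        intro C hC
        obtain ⟨C', -, rfl⟩ := Finset.mem_map.1 hC
        exact C'.2
      have h2 : wt w (FU F (U \ s.biUnion t)) ≤
          wt w (FU F U \ s.map (Function.Embedding.subtype _)) :=
        Finset.sum_le_sum_of_subset hsub
      have h3 : wt w (FU F U \ s.map (Function.Embedding.subtype _))
          + wt w (s.map (Function.Embedding.subtype _)) = wt w (FU F U) :=
        Finset.sum_sdiff hsU
      have h4 : s.card ≤ wt w (s.map (Function.Embedding.subtype _)) := by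
        rw [← Finset.card_map (Function.Embedding.subtype _), Finset.card_eq_sum_ones]
        exact Finset.sum_le_sum fun C hC => hw C (Finset.mem_filter.1 (hsU hC)).1
      have h5 := Finset.card_sdiff_add_card_eq_card hN
      omega
    obtain ⟨m, hinj, hm⟩ := (Finset.all_card_le_biUnion_card_iff_exists_injective t).1 hall
    have hlit : ∀ C : FU F U, ∃ b, (m C, b) ∈ C.1 := by
      intro C
      obtain ⟨l, hl, hlm⟩ := Finset.mem_image.1 (Finset.mem_inter.1 (hm C)).1
      exact ⟨l.2, by rwa [← hlm]⟩
    choose b hb using hlit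
    refine ⟨fun v => if h : ∃ C, m C = v then b h.choose else false, fun C hC => ?_⟩
    refine ⟨_, hb ⟨C, hC⟩, (Finset.mem_inter.1 (hm _)).2, ?_⟩
    have hex : ∃ C', m C' = m ⟨C, hC⟩ := ⟨_, rfl⟩
    simp only [dif_pos hex]
    rw [hinj hex.choose_spec]
  · intro X hX
    have hdisj : Disjoint U X := by
      rw [Finset.disjoint_left]
      intro v hv hvX
      obtain ⟨C, hC, l, hl, rfl⟩ := mem_vars.1 (hX hvX)
      obtain ⟨hCF, hCU⟩ := Finset.mem_sdiff.1 hC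
      exact hCU (Finset.mem_filter.2 ⟨hCF, l, hl, hv⟩)
    have hXF : X ⊆ vars F := by
      intro v hv
      obtain ⟨C, hC, h⟩ := mem_vars.1 (hX hv)
      exact mem_vars.2 ⟨C, (Finset.mem_sdiff.1 hC).1, h⟩
    have h1 := hmax (U ∪ X) (Finset.mem_powerset.2 (Finset.union_subset hU hXF))
    have hd : Disjoint (FU F U) (FU (F \ FU F U) X) :=
      Finset.disjoint_sdiff.mono_right (Finset.filter_subset _ _)
    have h2 : wt w (FU F (U ∪ X)) = wt w (FU F U) + wt w (FU (F \ FU F U) X) := by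
      rw [FU_union, wt, Finset.sum_union hd]
      rfl
    rw [Finset.card_union_of_disjoint hdisj, h2] at h1
    push_cast at h1
    omega

theorem stmt19 (F : Finset Clause) (w : Clause → ℕ)
    (hF : IsCNF F) (hw : ∀ C ∈ F, 0 < w C) (h3 : Sat3 F) :
    ∃ U ⊆ vars F, ∃ τ : ℕ → Bool,
      (2:ℝ)/3 * wt w F + (1:ℝ)/3 * wt w (FU F U)
        + (2:ℝ)/453 * ((vars (F \ FU F U)).card : ℝ) ≤ (satWt w τ F : ℝ) := by
  obtain ⟨U, hU, ⟨β, hβ⟩, hexp⟩ := exists_autarky_expanding F w hw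
  have hsub : F \ FU F U ⊆ F := Finset.sdiff_subset
  obtain ⟨γ, hγ⟩ := hexp.exists_satWt_ge (fun C hC => hF C (hsub hC))
    (fun C hC => hw C (hsub hC))
    (fun C₁ h₁ C₂ h₂ C₃ h₃ => h3 C₁ (hsub h₁) C₂ (hsub h₂) C₃ (hsub h₃))
  refine ⟨U, hU, fun v => if v ∈ U then β v else γ v, ?_⟩
  have hFU : FU F U ⊆ F := Finset.filter_subset _ _
  have hwt : (wt w F : ℝ) = wt w (F \ FU F U) + wt w (FU F U) := by
    exact_mod_cast (Finset.sum_sdiff hFU).symm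
  have hsat : (satWt w (fun v => if v ∈ U then β v else γ v) F : ℝ)
      = satWt w γ (F \ FU F U) + wt w (FU F U) := by
    rw [satWt_cast, satWt_cast, ← Finset.sum_sdiff hFU, wt, Nat.cast_sum]
    congr 1
    · refine Finset.sum_congr rfl fun C hC => ?_
      obtain ⟨hCF, hCU⟩ := Finset.mem_sdiff.1 hC
      have : SatC (fun v => if v ∈ U then β v else γ v) C ↔ SatC γ C := by
        refine exists_congr fun l => and_congr_right fun hl => ?_
        simp only [if_neg fun h => hCU (Finset.mem_filter.2 ⟨hCF, l, hl, h⟩)]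
      simp only [this]
    · refine Finset.sum_congr rfl fun C hC => ?_
      obtain ⟨l, hl, hlU, hlβ⟩ := hβ C hC
      exact if_pos ⟨l, hl, by simp only [if_pos hlU, hlβ]⟩
  rw [hsat, hwt]
  linarith
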